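/- Let N ≥ 3 and let K ⊆ ℝ^N be a closed set which satisfies the topological condition (T) and is contained in a rectifiable cone. Then every local energy minimizer u in ℝ^N ∖ K satisfies ∫_{B_1 ∖ K} |∇u(x)|² |x|^{2−N} dx < ∞ (i.e. ∇u is more integrable at the origin than the a priori L² bound suggests). -/

import Mathlib

open MeasureTheory Metric Set Filter
open scoped ENNReal NNReal Topology

noncomputable section

/-- `ℝ^N` as a Euclidean space. -/
abbrev Rn (N : ℕ) := EuclideanSpace ℝ (Fin N)

/-- `u` is locally Lipschitz on the set `s` (neighborhoods taken within `s`). -/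
def LocLipOn (N : ℕ) (u : Rn N → ℝ) (s : Set (Rn N)) : Prop :=
  ∀ x ∈ s, ∃ t ∈ nhdsWithin x s, ∃ C : ℝ≥0, LipschitzOnWith C u t

/-- `u` is a local energy minimizer in `ℝ^N ∖ K`: locally Lipschitz on `Kᶜ`, with finite
local energy, minimizing the Dirichlet energy in every ball among competitors with the
same boundary values. -/
def LocMin (N : ℕ) (K : Set (Rn N)) (u : Rn N → ℝ) : Prop :=
  LocLipOn N u Kᶜ ∧
  (∀ R : ℝ, 0 < R →
    IntegrableOn (fun x => (u x) ^ 2 + ‖gradient u x‖ ^ 2) (ball 0 R \ K) volume) ∧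
  ∀ R : ℝ, 0 < R → ∀ v : Rn N → ℝ, LocLipOn N v Kᶜ →
    IntegrableOn (fun x => ‖gradient v x‖ ^ 2) (ball 0 R \ K) volume →
    (∀ x, x ∉ ball (0 : Rn N) R ∪ K → v x = u x) →
    (∫ x in ball (0 : Rn N) R \ K, ‖gradient u x‖ ^ 2) ≤
      ∫ x in ball (0 : Rn N) R \ K, ‖gradient v x‖ ^ 2

/-- Topological condition (T): for a.e. `r > 0` such that `∂B_r ∖ K` is not connected,
every connected component `U` of `∂B_r ∖ K` admits an open set `D ⊆ B_r ∖ K` with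
`∂D ∖ U ⊆ K`. -/
def CondT (N : ℕ) (K : Set (Rn N)) : Prop :=
  ∀ᵐ r : ℝ ∂volume, 0 < r → ¬ IsConnected (sphere (0 : Rn N) r \ K) →
    ∀ x₀ ∈ sphere (0 : Rn N) r \ K,
      ∃ D : Set (Rn N), IsOpen D ∧ D ⊆ ball (0 : Rn N) r \ K ∧
        frontier D \ connectedComponentIn (sphere (0 : Rn N) r \ K) x₀ ⊆ K

/-- `E` is `k`-rectifiable: up to an `H^k`-null set, `E` is covered by countably many
Lipschitz images of `ℝ^k`. -/
def KRectifiable (N k : ℕ) (E : Set (Rn N)) : Prop :=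
  ∃ f : ℕ → (EuclideanSpace ℝ (Fin k) → Rn N),
    (∀ i, ∃ C : ℝ≥0, LipschitzWith C (f i)) ∧
    μH[(k : ℝ)] (E \ ⋃ i, Set.range (f i)) = 0

/-- `K` is contained in a closed cone `C` whose trace on the unit sphere
is `(N-2)`-rectifiable. -/
def InRectCone (N : ℕ) (K : Set (Rn N)) : Prop :=
  ∃ C : Set (Rn N), IsClosed C ∧ K ⊆ C ∧
    (∀ t : ℝ, 0 ≤ t → ∀ x ∈ C, t • x ∈ C) ∧
    KRectifiable N (N - 2) (C ∩ sphere (0 : Rn N) 1)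

/-- The weighted energy `∫_{B_r ∖ K} |∇u(x)|² |x|^{2-N} dx` (as an extended real). -/
def Phi (N : ℕ) (K : Set (Rn N)) (u : Rn N → ℝ) (r : ℝ) : ℝ≥0∞ :=
  ∫⁻ x in ball (0 : Rn N) r \ K,
    ENNReal.ofReal (‖gradient u x‖ ^ 2 * ‖x‖ ^ ((2 : ℝ) - N))

lemma aux_slice_dim {n : ℕ} (A : Set (Rn (n+1))) (c : ℝ) :
    dimH ((fun x : Rn (n+1) => (fun j : Fin n => c * x j.succ / x 0)) '' (A ∩ {x | x 0 ≠ 0})) ≤ dimH A := by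
  refine le_trans (dimH_image_le_of_locally_lipschitzOn ?_) (dimH_mono inter_subset_left)
  rintro x ⟨_, hx⟩
  have hd : ContDiffAt ℝ 1 (fun x : Rn (n+1) => (fun j : Fin n => c * x j.succ / x 0)) x := by
    rw [contDiffAt_pi]
    intro j
    refine ContDiffAt.div ?_ ?_ hx
    · fun_prop
    · fun_prop
  obtain ⟨C, t, ht, hC⟩ := hd.exists_lipschitzOnWith
  exact ⟨C, t, mem_nhdsWithin_of_mem_nhds ht, hC⟩

lemma aux_dim {N k : ℕ} (E : Set (Rn N)) (h : KRectifiable N k E) : dimH E ≤ k := by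
  obtain ⟨f, hf, h0⟩ := h
  have : E ⊆ (E \ ⋃ i, Set.range (f i)) ∪ ⋃ i, Set.range (f i) := by
    rw [Set.sdiff_union_self]; exact subset_union_left
  refine (dimH_mono this).trans ?_
  rw [dimH_union, dimH_iUnion]
  refine max_le ?_ (iSup_le fun i => ?_)
  · have := dimH_le_of_hausdorffMeasure_ne_top (d := (k : ℝ≥0)) (s := E \ ⋃ i, Set.range (f i))
      (by simp [h0])
    simpa using this
  · obtain ⟨C, hC⟩ := hf i
    refine hC.dimH_range_le.trans ?_
    rw [Real.dimH_univ_eq_finrank]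
    simp

lemma cone_null {N : ℕ} (hN : 3 ≤ N) (C : Set (Rn N)) (hC : IsClosed C)
    (hcone : ∀ t : ℝ, 0 ≤ t → ∀ x ∈ C, t • x ∈ C)
    (hrect : KRectifiable N (N - 2) (C ∩ sphere (0 : Rn N) 1)) : volume C = 0 := by
  obtain ⟨n, rfl⟩ : ∃ n, N = n + 1 := ⟨N - 1, by omega⟩
  have hd := aux_dim _ hrect
  have e1 := (EuclideanSpace.volume_preserving_symm_measurableEquiv_toLp (Fin (n+1))).symm
  have e2 := (volume_preserving_piFinSuccAbove (fun _ : Fin (n+1) => ℝ) 0).symm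
  have e := e2.trans e1
  have hm : MeasurableSet C := hC.measurableSet
  rw [← e.measure_preimage hm.nullMeasurableSet]
  rw [Measure.volume_eq_prod, Measure.measure_prod_null (e.measurable hm)]
  have hne : ∀ᵐ c : ℝ ∂volume, c ≠ 0 := by
    simp [ae_iff]
  filter_upwards [hne] with c hc
  have hsub : (Prod.mk c ⁻¹' (((MeasurableEquiv.piFinSuccAbove (fun _ : Fin (n+1) => ℝ) 0).symm.trans
    (MeasurableEquiv.toLp 2 (Fin (n+1) → ℝ)).symm.symm) ⁻¹' C)) ⊆
      ((fun x : Rn (n+1) => (fun j : Fin n => c * x j.succ / x 0)) ''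
        ((C ∩ sphere (0 : Rn (n+1)) 1) ∩ {x | x 0 ≠ 0})) := by
    intro y hy
    set z : Rn (n+1) := ((MeasurableEquiv.piFinSuccAbove (fun _ : Fin (n+1) => ℝ) 0).symm.trans
      (MeasurableEquiv.toLp 2 (Fin (n+1) → ℝ)).symm.symm) (c, y) with hz
    have hzC : z ∈ C := hy
    have z0 : z 0 = c := by
      simp [hz]
    have zs : ∀ j : Fin n, z j.succ = y j := by
      intro j
      simp [hz]
    have hz0 : z ≠ 0 := by
      intro h; rw [h] at z0; exact hc (by simpa using z0.symm)
    have hzn : ‖z‖ ≠ 0 := by simpa using hz0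
    refine ⟨‖z‖⁻¹ • z, ⟨⟨hcone _ (by positivity) _ hzC, ?_⟩, ?_⟩, ?_⟩
    · simp [norm_smul, hzn]
    · simp [z0, hc, hzn]
    · ext j
      simp [z0, zs]
      field_simp
  refine measure_mono_null hsub ?_
  have h1 := (aux_slice_dim (C ∩ sphere (0 : Rn (n+1)) 1) c).trans hd
  rw [← hausdorffMeasure_pi_real]
  have := hausdorffMeasure_of_dimH_lt (d := (n : ℝ≥0)) (h1.trans_lt ?_)
  · simpa using this
  · norm_cast
    omega
lemma ae_diff {N : ℕ} (K : Set (Rn N)) (hK : IsClosed K) (u : Rn N → ℝ) (hu : LocLipOn N u Kᶜ) :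
    ∀ᵐ x : Rn N, x ∉ K → DifferentiableAt ℝ u x := by
  have : volume {x : Rn N | x ∉ K ∧ ¬ DifferentiableAt ℝ u x} = 0 := by
    refine measure_null_of_locally_null _ ?_
    rintro x ⟨hx, _⟩
    obtain ⟨t, ht, C, hC⟩ := hu x hx
    rw [hK.isOpen_compl.nhdsWithin_eq hx] at ht
    obtain ⟨o, hot, ho, hxo⟩ := _root_.mem_nhds_iff.1 ht
    refine ⟨o ∩ {x : Rn N | x ∉ K ∧ ¬ DifferentiableAt ℝ u x}, ?_, ?_⟩
    · rw [inter_comm]; exact inter_mem_nhdsWithin _ (ho.mem_nhds hxo)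
    have h := (hC.mono hot).ae_differentiableWithinAt_of_mem (μ := (volume : Measure (Rn N)))
    refine measure_mono_null ?_ (ae_iff.1 h)
    rintro y ⟨hy, _, hy2⟩ h3
    exact hy2 ((h3 hy).differentiableAt (ho.mem_nhds hy))
  rw [ae_iff]
  simpa [Classical.not_imp] using this

lemma polar_mp {N : ℕ} (hN : 1 ≤ N) :
    MeasurePreserving (fun p : sphere (0 : Rn N) 1 × Ioi (0:ℝ) => (p.2.1 • p.1.1 : Rn N))
      ((volume : Measure (Rn N)).toSphere.prod (Measure.volumeIoiPow (N - 1))) volume ∧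
    MeasurableEmbedding (fun p : sphere (0 : Rn N) 1 × Ioi (0:ℝ) => (p.2.1 • p.1.1 : Rn N)) := by
  have : Nonempty (Fin N) := ⟨⟨0, hN⟩⟩
  have : Nontrivial (Rn N) := inferInstance
  have h1 := (volume : Measure (Rn N)).measurePreserving_homeomorphUnitSphereProd
  have h2 : MeasurePreserving (homeomorphUnitSphereProd (Rn N)).toMeasurableEquiv.symm
    ((volume : Measure (Rn N)).toSphere.prod
      (Measure.volumeIoiPow (N - 1)))
      ((volume : Measure (Rn N)).comap ((↑) : ({0}ᶜ : Set (Rn N)) → Rn N)) := by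
    have := MeasurePreserving.symm (homeomorphUnitSphereProd (Rn N)).toMeasurableEquiv h1
    simpa using this
  have h3 := measurePreserving_subtype_coe (μa := (volume : Measure (Rn N)))
    (measurableSet_singleton (0 : Rn N)).compl
  rw [restrict_compl_singleton] at h3
  have h4 := h3.comp h2
  have h5 := (MeasurableEmbedding.subtype_coe (measurableSet_singleton (0 : Rn N)).compl).comp
    (homeomorphUnitSphereProd (Rn N)).toMeasurableEquiv.symm.measurableEmbedding
  have h6 : (fun p : sphere (0 : Rn N) 1 × Ioi (0:ℝ) => (p.2.1 • p.1.1 : Rn N)) =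
    Subtype.val ∘ (homeomorphUnitSphereProd (Rn N)).toMeasurableEquiv.symm := by
    ext1 p
    simp
  rw [h6]
  exact ⟨h4, h5⟩

lemma radial_ae {n : ℕ} {P : ℝ → Prop} (h : ∀ᵐ r ∂(Measure.volumeIoiPow n), P r.1) :
    ∀ᵐ r : ℝ, 0 < r → P r := by
  rw [Measure.volumeIoiPow, ae_withDensity_iff (by fun_prop)] at h
  have h1 : ∀ᵐ r ∂(Measure.comap (Subtype.val : Ioi (0:ℝ) → ℝ) volume), P r.1 := by
    filter_upwards [h] with r hr
    apply hr
    have := r.2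
    rw [mem_Ioi] at this
    simp only [ne_eq, ENNReal.ofReal_eq_zero, not_le]
    positivity
  rw [ae_iff] at h1 ⊢
  rw [comap_subtype_coe_apply measurableSet_Ioi] at h1
  refine measure_mono_null ?_ h1
  intro r hr
  simp only [mem_ofPred_eq, Classical.not_imp] at hr
  exact ⟨⟨r, hr.1⟩, hr.2, rfl⟩

lemma radial_int {n : ℕ} (f : ℝ → ℝ) :
    ∫ r, f r.1 ∂(Measure.volumeIoiPow n) = ∫ r in Ioi (0:ℝ), r ^ n * f r := by
  simp only [Measure.volumeIoiPow, ENNReal.ofReal]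
  rw [integral_withDensity_eq_integral_smul,
        integral_subtype_comap measurableSet_Ioi fun a ↦ Real.toNNReal (a ^ n) • f a,
        setIntegral_congr_fun measurableSet_Ioi fun x hx ↦ ?_]
  · simp only [NNReal.smul_def, Real.coe_toNNReal _ (pow_nonneg hx.out.le _), smul_eq_mul]
  · exact (measurable_subtype_coe.pow_const _).real_toNNReal

lemma oneD {N : ℕ} (K : Set (Rn N)) (hK : IsClosed K) (u : Rn N → ℝ) (hu : LocLipOn N u Kᶜ)
    (θ : Rn N) {ε R : ℝ} (hε : 0 < ε) (hR : ε ≤ R) (hθ : ∀ r : ℝ, 0 < r → r • θ ∉ K)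
    (hd : ∀ᵐ r : ℝ, 0 < r → DifferentiableAt ℝ u (r • θ)) :
    ∫ r in ε..R, u (r • θ) * inner ℝ (gradient u (r • θ)) θ
      = (u (R • θ) ^ 2 - u (ε • θ) ^ 2) / 2 := by
  have hlip : LocallyLipschitzOn (Icc ε R) (fun r : ℝ => u (r • θ)) := by
    intro r hr
    have hr0 : 0 < r := hε.trans_le hr.1
    obtain ⟨t, ht, C, hC⟩ := hu (r • θ) (hθ r hr0)
    rw [hK.isOpen_compl.nhdsWithin_eq (hθ r hr0)] at ht
    have hl : LipschitzWith ‖θ‖₊ (fun r : ℝ => r • θ) := by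
      refine LipschitzWith.of_dist_le_mul fun a b => ?_
      rw [dist_eq_norm, dist_eq_norm, ← sub_smul, norm_smul, mul_comm]; rfl
    refine ⟨C * ‖θ‖₊, (fun r : ℝ => r • θ) ⁻¹' t,
      mem_nhdsWithin_of_mem_nhds (hl.continuous.continuousAt.preimage_mem_nhds ht), ?_⟩
    exact hC.comp hl.lipschitzOnWith (fun _ h => h)
  obtain ⟨C, hC⟩ := hlip.exists_lipschitzOnWith_of_compact isCompact_Icc
  rw [← uIcc_of_le hR] at hC
  have hac := hC.absolutelyContinuousOnInterval
  have := hac.integral_deriv_mul_eq_sub hac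
  have h2 : ∫ r in ε..R, u (r • θ) * inner ℝ (gradient u (r • θ)) θ =
     ∫ r in ε..R, (1/2 : ℝ) * (deriv (fun r : ℝ => u (r • θ)) r * u (r • θ) +
       u (r • θ) * deriv (fun r : ℝ => u (r • θ)) r) := by
    apply intervalIntegral.integral_congr_ae
    filter_upwards [hd] with r hr hr2
    rw [uIoc_of_le hR] at hr2
    have h3 := (hr (hε.trans hr2.1))
    have h4 : HasDerivAt (fun r : ℝ => r • θ) θ r := by
      simpa using (hasDerivAt_id r).smul_const θ
    have h5 := h3.hasGradientAt.hasFDerivAt.comp_hasDerivAt r h4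
    have h6 : deriv (fun r : ℝ => u (r • θ)) r = inner ℝ (gradient u (r • θ)) θ := by
      have := h5.deriv
      simpa [Function.comp_def] using this
    rw [h6]; ring
  rw [h2, intervalIntegral.integral_const_mul, this]
  ring
lemma gradient_meas {N : ℕ} (u : Rn N → ℝ) : Measurable (gradient u) := by
  have : gradient u = fun x => (InnerProductSpace.toDual ℝ (Rn N)).symm (fderiv ℝ u x) := rfl
  rw [this]
  exact (LinearIsometryEquiv.continuous _).measurable.comp (measurable_fderiv ℝ u)

lemma u_meas {N : ℕ} (K : Set (Rn N)) (hK : IsClosed K) (u : Rn N → ℝ) (hu : LocLipOn N u Kᶜ) :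
    AEStronglyMeasurable u (volume.restrict Kᶜ) := by
  refine ContinuousOn.aestronglyMeasurable ?_ hK.isOpen_compl.measurableSet
  intro x hx
  obtain ⟨t, ht, C, hC⟩ := hu x hx
  have := hC.continuousOn x (mem_of_mem_nhdsWithin hx ht)
  exact this.mono_of_mem_nhdsWithin ht

lemma locLip_mul {N : ℕ} (s : Set (Rn N)) (u w : Rn N → ℝ) (hu : LocLipOn N u s)
    {L : ℝ≥0} (hw : LipschitzWith L w) : LocLipOn N (fun x => u x * w x) s := by
  intro x hx
  obtain ⟨t, ht, C, hC⟩ := hu x hx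
  have hp := hC.prodMk (hw.lipschitzOnWith (s := t))
  have hm : ContDiffAt ℝ 1 (fun p : ℝ × ℝ => p.1 * p.2) (u x, w x) := by fun_prop
  obtain ⟨D, o, ho, hD⟩ := hm.exists_lipschitzOnWith
  have hc := hp.continuousOn x (mem_of_mem_nhdsWithin hx ht)
  have hc2 := hc.mono_of_mem_nhdsWithin ht
  have h3 := hc2.preimage_mem_nhdsWithin ho
  refine ⟨t ∩ (fun x => (u x, w x)) ⁻¹' o, Filter.inter_mem ht h3, D * max C L, ?_⟩
  exact hD.comp (hp.mono inter_subset_left) (fun y hy => hy.2)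

lemma minim {N : ℕ} (K : Set (Rn N)) (hK : IsClosed K) (u : Rn N → ℝ) (hu : LocMin N K u)
    {R : ℝ} (hR : 0 < R) (g : Rn N → ℝ) {L : ℝ≥0} (hg : LipschitzWith L g) {M : ℝ}
    (hM : ∀ x, |g x| ≤ M) (hg0 : ∀ x, R ≤ ‖x‖ → g x = 0) :
    IntegrableOn (fun x => g x * ‖gradient u x‖ ^ 2) (ball 0 R \ K) ∧
    IntegrableOn (fun x => u x * inner ℝ (gradient u x) (gradient g x)) (ball 0 R \ K) ∧
    ∫ x in ball (0 : Rn N) R \ K, g x * ‖gradient u x‖ ^ 2 ≤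
      - ∫ x in ball (0 : Rn N) R \ K, u x * inner ℝ (gradient u x) (gradient g x) := by
  obtain ⟨hlip, hint, hmin⟩ := hu
  have hi := hint R hR
  have hM0 : 0 ≤ M := (abs_nonneg _).trans (hM 0)
  have hms : MeasurableSet (ball (0 : Rn N) R \ K) := measurableSet_ball.diff hK.measurableSet
  have hum : AEStronglyMeasurable u (volume.restrict (ball (0 : Rn N) R \ K)) :=
    (u_meas K hK u hlip).mono_measure (Measure.restrict_mono (fun x hx => hx.2) le_rfl)
  have hgum : AEStronglyMeasurable (gradient u) (volume.restrict (ball (0 : Rn N) R \ K)) :=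
    (gradient_meas u).aestronglyMeasurable
  have hggm : AEStronglyMeasurable (gradient g) (volume.restrict (ball (0 : Rn N) R \ K)) :=
    (gradient_meas g).aestronglyMeasurable
  have hgm : AEStronglyMeasurable g (volume.restrict (ball (0 : Rn N) R \ K)) :=
    hg.continuous.aestronglyMeasurable
  have hgL : ∀ x, ‖gradient g x‖ ≤ L := by
    intro x
    have h1 := norm_fderiv_le_of_lipschitz ℝ hg (x₀ := x)
    have h2 : ‖gradient g x‖ = ‖fderiv ℝ g x‖ := LinearIsometryEquiv.norm_map _ _
    rw [h2]; exact h1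
  have hu2 : IntegrableOn (fun x => ‖gradient u x‖ ^ 2) (ball 0 R \ K) := by
    refine hi.mono' (hgum.norm.pow 2) (Eventually.of_forall fun x => ?_)
    rw [Real.norm_of_nonneg (by positivity)]
    nlinarith [sq_nonneg (u x)]
  have I1 : IntegrableOn (fun x => g x * ‖gradient u x‖ ^ 2) (ball 0 R \ K) := by
    refine (hi.const_mul M).mono' (hgm.mul (hgum.norm.pow 2)) (Eventually.of_forall fun x => ?_)
    rw [norm_mul, Real.norm_of_nonneg (by positivity : 0 ≤ ‖gradient u x‖ ^ 2), Real.norm_eq_abs]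
    refine mul_le_mul (hM x) ?_ (by positivity) hM0
    nlinarith [sq_nonneg (u x)]
  have I2 : IntegrableOn (fun x => u x * inner ℝ (gradient u x) (gradient g x)) (ball 0 R \ K) := by
    refine (hi.const_mul (L:ℝ)).mono' (hum.mul (hgum.inner hggm)) (Eventually.of_forall fun x => ?_)
    have h1 := abs_real_inner_le_norm (gradient u x) (gradient g x)
    rw [norm_mul, Real.norm_eq_abs, Real.norm_eq_abs]
    have h2 : |inner ℝ (gradient u x) (gradient g x)| ≤ ‖gradient u x‖ * L :=
      h1.trans (mul_le_mul_of_nonneg_left (hgL x) (norm_nonneg _))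
    calc _ ≤ |u x| * (‖gradient u x‖ * L) := mul_le_mul_of_nonneg_left h2 (abs_nonneg _)
      _ = L * (|u x| * ‖gradient u x‖) := by ring
      _ ≤ _ := by
        refine mul_le_mul_of_nonneg_left ?_ L.2
        rw [← sq_abs (u x)]
        nlinarith [sq_nonneg (|u x| - ‖gradient u x‖), sq_nonneg (u x), sq_abs (u x),
          sq_nonneg (‖gradient u x‖)]
  have I3 : IntegrableOn (fun x => ‖g x • gradient u x + u x • gradient g x‖ ^ 2)
      (ball 0 R \ K) := by
    refine (hi.const_mul (2 * (M ^ 2 + (L:ℝ) ^ 2))).mono'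
      (((hgm.smul hgum).add (hum.smul hggm)).norm.pow 2) (Eventually.of_forall fun x => ?_)
    rw [Real.norm_of_nonneg (by positivity)]
    have h1 : ‖g x • gradient u x + u x • gradient g x‖ ≤ M * ‖gradient u x‖ + |u x| * L := by
      refine (norm_add_le _ _).trans ?_
      rw [norm_smul, norm_smul, Real.norm_eq_abs, Real.norm_eq_abs]
      gcongr
      · exact hM x
      · exact hgL x
    have h2 : ‖g x • gradient u x + u x • gradient g x‖ ^ 2 ≤
      (M * ‖gradient u x‖ + |u x| * L) ^ 2 := by gcongr
    have h3 := sq_abs (u x)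
    have h4 : (M * ‖gradient u x‖ + |u x| * L) ^ 2 ≤
        2 * (M * ‖gradient u x‖) ^ 2 + 2 * (|u x| * L) ^ 2 := by
      nlinarith [sq_nonneg (M * ‖gradient u x‖ - |u x| * L)]
    have h5 : (|u x| * L) ^ 2 = u x ^ 2 * L ^ 2 := by rw [mul_pow, h3]
    nlinarith [mul_nonneg (sq_nonneg M) (sq_nonneg (u x)),
      mul_nonneg (sq_nonneg (L:ℝ)) (sq_nonneg (‖gradient u x‖))]
  refine ⟨I1, I2, ?_⟩
  set B := ∫ x in ball (0 : Rn N) R \ K, ‖g x • gradient u x + u x • gradient g x‖ ^ 2 with hB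
  set A1 := ∫ x in ball (0 : Rn N) R \ K, g x * ‖gradient u x‖ ^ 2 with hA1
  set A2 := ∫ x in ball (0 : Rn N) R \ K, u x * inner ℝ (gradient u x) (gradient g x) with hA2
  have key : ∀ t : ℝ, 0 < t → 2 * (A1 + A2) ≤ t * B := by
    intro t ht
    have hw : ∃ L', LipschitzWith L' (fun x => 1 - t * g x) :=
      ⟨_, (LipschitzWith.const (1:ℝ)).sub ((lipschitzWith_smul t).comp hg)⟩
    obtain ⟨L', hw⟩ := hw
    have hgrad : ∀ᵐ x ∂(volume.restrict (ball (0 : Rn N) R \ K)),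
        ‖gradient u x‖ ^ 2 - 2 * t * (g x * ‖gradient u x‖ ^ 2 +
          u x * inner ℝ (gradient u x) (gradient g x))
        + t ^ 2 * ‖g x • gradient u x + u x • gradient g x‖ ^ 2
        = ‖gradient (fun x => u x * (1 - t * g x)) x‖ ^ 2 := by
      rw [ae_restrict_iff' hms]
      filter_upwards [ae_diff K hK u hlip, hg.ae_differentiableAt (μ := volume)] with x h1 h2 hx
      have h3 := (h1 hx.2).hasGradientAt
      have h4 := h2.hasGradientAt
      have h5 := h3.hasFDerivAt.mul ((h4.hasFDerivAt.const_mul t).const_sub 1)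
      have h6 : HasGradientAt (fun x => u x * (1 - t * g x))
          (gradient u x - t • (g x • gradient u x + u x • gradient g x)) x := by
        rw [hasGradientAt_iff_hasFDerivAt]
        convert! h5 using 1
        simp only [map_sub, map_smul, map_add]
        module
      rw [h6.gradient, norm_sub_sq_real, norm_smul, inner_smul_right, inner_add_right,
        inner_smul_right, inner_smul_right, real_inner_self_eq_norm_sq, mul_pow,
        Real.norm_eq_abs, sq_abs]
      ring
    have I12 : IntegrableOn (fun x => 2 * t * (g x * ‖gradient u x‖ ^ 2 +
          u x * inner ℝ (gradient u x) (gradient g x))) (ball 0 R \ K) :=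
      (I1.add I2).const_mul _
    have I13 : IntegrableOn (fun x => ‖gradient u x‖ ^ 2 - 2 * t * (g x * ‖gradient u x‖ ^ 2 +
          u x * inner ℝ (gradient u x) (gradient g x))) (ball 0 R \ K) := hu2.sub I12
    have IL : IntegrableOn (fun x => ‖gradient u x‖ ^ 2 - 2 * t * (g x * ‖gradient u x‖ ^ 2 +
          u x * inner ℝ (gradient u x) (gradient g x))
        + t ^ 2 * ‖g x • gradient u x + u x • gradient g x‖ ^ 2) (ball 0 R \ K) :=
      I13.add (I3.const_mul _)
    have h := hmin R hR (fun x => u x * (1 - t * g x)) (locLip_mul _ _ _ hlip hw)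
      (IL.congr hgrad) (by
        intro x hx
        have : R ≤ ‖x‖ := by
          by_contra h
          exact hx (Or.inl (by simpa using h))
        simp [hg0 x this])
    rw [← integral_congr_ae hgrad, integral_add I13
      (I3.const_mul _), integral_sub hu2 I12, integral_const_mul,
      integral_const_mul, integral_add I1 I2] at h
    rw [← hA1, ← hA2, ← hB] at h
    have h' : t * (2 * (A1 + A2)) ≤ t * (t * B) := by nlinarith
    exact le_of_mul_le_mul_left h' ht
  have hlim : Tendsto (fun t : ℝ => t * B) (𝓝[>] 0) (𝓝 0) := by
    have : Tendsto (fun t : ℝ => t * B) (𝓝 0) (𝓝 (0 * B)) := tendsto_id.mul_const B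
    rw [zero_mul] at this
    exact this.mono_left nhdsWithin_le_nhds
  have := ge_of_tendsto hlim (b := 2 * (A1 + A2))
    (eventually_nhdsWithin_of_forall fun t ht => key t ht)
  linarith
/-- The truncated radial weight. -/
def gw (N k : ℕ) (ε R : ℝ) (x : Rn N) : ℝ := ((min (max ‖x‖ ε) R) ^ k)⁻¹ - (R ^ k)⁻¹

lemma gw_lip {N k : ℕ} {ε R : ℝ} (hε : 0 < ε) (hR : ε ≤ R) : ∃ L, LipschitzWith L (gw N k ε R) := by
  have h1 : ContDiffOn ℝ 1 (fun t : ℝ => (t ^ k)⁻¹ - (R ^ k)⁻¹) (Icc ε R) := by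
    refine ContDiffOn.sub (ContDiffOn.inv (by fun_prop) ?_) contDiffOn_const
    intro t ht
    exact pow_ne_zero _ (hε.trans_le ht.1).ne'
  obtain ⟨C, hC⟩ := h1.exists_lipschitzOnWith (by decide) (convex_Icc _ _) isCompact_Icc
  have h2 : LipschitzWith 1 (fun x : Rn N => min (max ‖x‖ ε) R) :=
    (lipschitzWith_one_norm.max_const ε).min_const R
  refine ⟨C * 1, ?_⟩
  rw [← lipschitzOnWith_univ] at h2 ⊢
  exact hC.comp h2 (fun x _ => ⟨le_min (le_max_right _ _) hR, min_le_right _ _⟩)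

lemma gw_nonneg {N k : ℕ} {ε R : ℝ} (hε : 0 < ε) (hR : ε ≤ R) (x : Rn N) : 0 ≤ gw N k ε R x := by
  have h : 0 < min (max ‖x‖ ε) R := lt_min (hε.trans_le (le_max_right _ _)) (hε.trans_le hR)
  rw [gw, sub_nonneg]
  gcongr
  exact min_le_right _ _

lemma gw_bdd {N k : ℕ} {ε R : ℝ} (hε : 0 < ε) (hR : ε ≤ R) (x : Rn N) :
    |gw N k ε R x| ≤ (ε ^ k)⁻¹ := by
  rw [abs_of_nonneg (gw_nonneg hε hR x)]
  have hR0 : 0 < R := hε.trans_le hR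
  have : ((min (max ‖x‖ ε) R) ^ k)⁻¹ ≤ (ε ^ k)⁻¹ := by
    gcongr
    exact le_min (le_max_right _ _) hR
  have h2 : 0 ≤ (R ^ k)⁻¹ := by positivity
  rw [gw]; linarith

lemma gw_zero {N k : ℕ} {ε R : ℝ} (x : Rn N) (hx : R ≤ ‖x‖) :
    gw N k ε R x = 0 := by
  rw [gw, min_eq_right (hx.trans (le_max_left _ _)), sub_self]

lemma gw_grad_in {N k : ℕ} {ε R : ℝ} (hR : ε ≤ R) (x : Rn N) (hx : ‖x‖ < ε) :
    gradient (gw N k ε R) x = 0 := by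
  have : gw N k ε R =ᶠ[𝓝 x] fun _ => (ε ^ k)⁻¹ - (R ^ k)⁻¹ := by
    filter_upwards [(isOpen_lt continuous_norm continuous_const).mem_nhds hx] with y hy
    rw [gw, max_eq_right (le_of_lt hy), min_eq_left hR]
  rw [gradient, this.fderiv_eq]
  simp

lemma gw_grad_mid {N k : ℕ} {ε R : ℝ} (hε : 0 < ε) (x : Rn N) (hx : ε < ‖x‖)
    (hx2 : ‖x‖ < R) :
    gradient (gw N k ε R) x = (-(k : ℝ) * (‖x‖ ^ (k + 2))⁻¹) • x := by
  have hev : gw N k ε R =ᶠ[𝓝 x] fun y => (‖y‖ ^ k)⁻¹ - (R ^ k)⁻¹ := by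
    filter_upwards [(isOpen_lt continuous_norm continuous_const).mem_nhds hx2,
      (isOpen_lt continuous_const continuous_norm).mem_nhds hx] with y hy hy2
    rw [gw, max_eq_left (le_of_lt hy2), min_eq_left (le_of_lt hy)]
  have hpos : 0 < ‖x‖ := hε.trans hx
  have h1 : HasFDerivAt (fun y : Rn N => ‖y‖) (‖x‖⁻¹ • innerSL ℝ x) x := by
    have h := (hasStrictFDerivAt_norm_sq x).hasFDerivAt.sqrt (by positivity)
    simp only [Real.sqrt_sq (norm_nonneg _)] at h
    convert! h using 1
    rw [two_smul, ← two_smul ℝ, smul_smul]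
    congr 1
    field_simp
  have h2 : HasDerivAt (fun t : ℝ => (t ^ k)⁻¹ - (R ^ k)⁻¹) (-(k : ℝ) * (‖x‖ ^ (k + 1))⁻¹) ‖x‖ := by
    have h := ((hasDerivAt_pow k ‖x‖).inv (pow_ne_zero _ hpos.ne')).sub_const ((R ^ k)⁻¹)
    convert! h using 1
    rcases k with _ | k
    · simp
    · simp only [Nat.add_sub_cancel]
      field_simp
      ring
  have h3 := h2.comp_hasFDerivAt x h1
  have h4 : HasGradientAt (gw N k ε R) ((-(k : ℝ) * (‖x‖ ^ (k + 2))⁻¹) • x) x := by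
    rw [hasGradientAt_iff_hasFDerivAt]
    refine HasFDerivAt.congr_of_eventuallyEq ?_ hev
    convert! h3 using 1
    ext y
    simp
    field_simp
    ring
  exact h4.gradient

lemma key_bound {N : ℕ} (hN : 3 ≤ N) (K C : Set (Rn N)) (hK : IsClosed K) (hC : IsClosed C)
    (hKC : K ⊆ C) (hcone : ∀ t : ℝ, 0 ≤ t → ∀ x ∈ C, t • x ∈ C) (hC0 : volume C = 0)
    (u : Rn N → ℝ) (hu : LocMin N K u) {ε R : ℝ} (hε : 0 < ε) (hR : ε ≤ R)
    (hI : Integrable (fun θ : sphere (0 : Rn N) 1 => u (R • θ.1) ^ 2)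
      (volume : Measure (Rn N)).toSphere) :
    IntegrableOn (fun x => gw N (N - 2) ε R x * ‖gradient u x‖ ^ 2) (ball 0 R \ K) ∧
    ∫ x in ball (0 : Rn N) R \ K, gw N (N - 2) ε R x * ‖gradient u x‖ ^ 2 ≤
      (N - 2 : ℕ) * ((∫ θ : sphere (0 : Rn N) 1, u (R • θ.1) ^ 2
        ∂(volume : Measure (Rn N)).toSphere) / 2) := by
  have hR0 : 0 < R := hε.trans_le hR
  obtain ⟨L, hL⟩ := gw_lip (N := N) (k := N - 2) hε hR
  obtain ⟨I1, I2, hle⟩ := minim K hK u hu hR0 _ hL (gw_bdd hε hR) (fun x hx => gw_zero x hx)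
  refine ⟨I1, hle.trans ?_⟩
  set k := N - 2 with hk
  have hkN : N = k + 2 := by omega
  have hK0 : volume K = 0 := measure_mono_null hKC hC0
  have hae : (ball (0 : Rn N) R \ K : Set (Rn N)) =ᵐ[volume] ball (0 : Rn N) R :=
    sdiff_null_ae_eq_self hK0
  rw [setIntegral_congr_set hae]
  have I2' := I2.congr_set_ae hae.symm
  rw [← integrable_indicator_iff measurableSet_ball] at I2'
  rw [← integral_indicator measurableSet_ball]
  set F : Rn N → ℝ := indicator (ball (0 : Rn N) R)
    (fun x => u x * inner ℝ (gradient u x) (gradient (gw N k ε R) x)) with hF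
  obtain ⟨mp, me⟩ := polar_mp (N := N) (by omega)
  have J1 : Integrable (fun p : sphere (0 : Rn N) 1 × Ioi (0:ℝ) => F (p.2.1 • p.1.1))
      ((volume : Measure (Rn N)).toSphere.prod (Measure.volumeIoiPow (N - 1))) :=
    (mp.integrable_comp_emb me).2 I2'
  rw [← mp.integral_comp me, integral_prod _ J1, ← integral_neg]
  have J2 := J1.integral_prod_left
  rw [div_eq_mul_inv, mul_comm _ (2⁻¹ : ℝ), ← mul_assoc, ← integral_const_mul]
  refine integral_mono_ae J2.neg (hI.const_mul _) ?_
  have hd : ∀ᵐ x : Rn N, DifferentiableAt ℝ u x := by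
    filter_upwards [ae_diff K hK u hu.1, (measure_eq_zero_iff_ae_notMem.1 hK0)] with x h1 h2
    exact h1 h2
  have hd2 := mp.quasiMeasurePreserving.ae hd
  have hd3 := Measure.ae_ae_of_ae_prod hd2
  have hcn : ∀ᵐ x : Rn N, x ∉ C := measure_eq_zero_iff_ae_notMem.1 hC0
  have hcn2 := Measure.ae_ae_of_ae_prod (mp.quasiMeasurePreserving.ae hcn)
  filter_upwards [hd3, hcn2] with θ hθ hθ2
  have hθC : ∀ r : ℝ, 0 < r → r • θ.1 ∉ K := by
    have a1 := radial_ae (P := fun r => r • θ.1 ∉ C) hθ2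
    intro r hr hmem
    have a2 : ∀ s : ℝ, 0 < s → s • θ.1 ∈ C := by
      intro s hs
      have := hcone (s / r) (by positivity) _ (hKC hmem)
      rwa [smul_smul, div_mul_cancel₀ _ hr.ne'] at this
    have a3 : ∀ᵐ s : ℝ, ¬ (0 < s) := by
      filter_upwards [a1] with s hs hs0 using hs hs0 (a2 s hs0)
    rw [ae_iff] at a3
    simp only [not_not] at a3
    have : volume (Ioi (0:ℝ)) = 0 := a3
    simp at this
  have hD := radial_ae (P := fun r => DifferentiableAt ℝ u (r • θ.1)) hθ
  have h1 := oneD K hK u hu.1 θ.1 hε hR hθC hD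
  have hθn : ‖θ.1‖ = 1 := by simpa using θ.2
  have h2 : ∫ r : Ioi (0:ℝ), F (r.1 • θ.1) ∂(Measure.volumeIoiPow (N - 1)) =
      -(k : ℝ) * ((u (R • θ.1) ^ 2 - u (ε • θ.1) ^ 2) / 2) := by
    rw [radial_int (fun r => F (r • θ.1)), ← h1, intervalIntegral.integral_of_le hR,
      ← integral_Ioc_eq_integral_Ioo.symm, ← integral_const_mul]
    rw [← integral_indicator measurableSet_Ioi, ← integral_indicator measurableSet_Ioo]
    have hne : ∀ᵐ r : ℝ, r ≠ ε := by simp [ae_iff]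
    refine integral_congr_ae ?_
    filter_upwards [hne] with r hr
    by_cases hr0 : 0 < r
    swap
    · rw [indicator_of_notMem (by simpa using hr0), indicator_of_notMem]
      intro h; exact hr0 (hε.trans h.1)
    rw [indicator_of_mem (by simpa using hr0)]
    have hnr : ‖r • θ.1‖ = r := by rw [norm_smul, hθn, mul_one, Real.norm_of_nonneg hr0.le]
    by_cases hrR : r < R
    swap
    · rw [indicator_of_notMem (fun h => hrR h.2), hF, indicator_of_notMem, mul_zero]
      rw [mem_ball_zero_iff, hnr]; exact hrR
    rw [hF, indicator_of_mem (by rw [mem_ball_zero_iff, hnr]; exact hrR)]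
    rcases lt_or_gt_of_ne hr with h | h
    · rw [indicator_of_notMem (fun h' => absurd h'.1 (not_lt.2 h.le)),
        gw_grad_in hR _ (by rw [hnr]; exact h)]
      simp
    · rw [indicator_of_mem (by exact ⟨h, hrR⟩),
        gw_grad_mid hε _ (by rw [hnr]; exact h) (by rw [hnr]; exact hrR), hnr,
        inner_smul_right, inner_smul_right]
      have : N - 1 = k + 1 := by omega
      rw [this]
      field_simp
      ring
  change -(∫ r : Ioi (0:ℝ), F (r.1 • θ.1) ∂(Measure.volumeIoiPow (N - 1))) ≤ _
  rw [h2]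
  have : 0 ≤ (k:ℝ) * (u (ε • θ.1) ^ 2) := by positivity
  nlinarith

lemma exists_R {N : ℕ} (hN : 3 ≤ N) (K : Set (Rn N)) (hK : IsClosed K) (hK0 : volume K = 0)
    (u : Rn N → ℝ) (hu : LocMin N K u) :
    ∃ R : ℝ, 1 < R ∧ Integrable (fun θ : sphere (0 : Rn N) 1 => u (R • θ.1) ^ 2)
      (volume : Measure (Rn N)).toSphere := by
  obtain ⟨hlip, hint, -⟩ := hu
  have hi := hint 2 two_pos
  have hum : AEStronglyMeasurable u (volume.restrict (ball (0 : Rn N) 2 \ K)) :=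
    (u_meas K hK u hlip).mono_measure (Measure.restrict_mono (fun x hx => hx.2) le_rfl)
  have h1 : IntegrableOn (fun x => u x ^ 2) (ball (0 : Rn N) 2 \ K) := by
    refine hi.mono' (hum.pow 2) (Eventually.of_forall fun x => ?_)
    rw [Real.norm_of_nonneg (by positivity)]
    nlinarith [sq_nonneg ‖gradient u x‖]
  have hae : (ball (0 : Rn N) 2 \ K : Set (Rn N)) =ᵐ[volume] ball (0 : Rn N) 2 :=
    sdiff_null_ae_eq_self hK0
  have I2' := h1.congr_set_ae hae.symm
  rw [← integrable_indicator_iff measurableSet_ball] at I2'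
  obtain ⟨mp, me⟩ := polar_mp (N := N) (by omega)
  have J1 := (mp.integrable_comp_emb me).2 I2'
  have J2 := J1.prod_left_ae
  have J3 := radial_ae (P := fun r => Integrable (fun θ : sphere (0 : Rn N) 1 =>
    indicator (ball (0 : Rn N) 2) (fun x => u x ^ 2) (r • θ.1))
      (volume : Measure (Rn N)).toSphere) J2
  have : ∃ r ∈ Ioo (1:ℝ) 2, 0 < r → Integrable (fun θ : sphere (0 : Rn N) 1 =>
    indicator (ball (0 : Rn N) 2) (fun x => u x ^ 2) (r • θ.1))
      (volume : Measure (Rn N)).toSphere := by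
    by_contra! hcon
    have h0 : volume (Ioo (1:ℝ) 2) = 0 := by
      refine measure_mono_null ?_ (ae_iff.1 J3)
      intro r hr h
      exact (hcon r hr).2 (h (hcon r hr).1)
    norm_num at h0
  obtain ⟨r, hr, h⟩ := this
  have hr0 : 0 < r := by linarith [hr.1]
  refine ⟨r, hr.1, (h hr0).congr (Eventually.of_forall fun θ => ?_)⟩
  have hθn : ‖θ.1‖ = 1 := by simpa using θ.2
  have hnr : ‖r • θ.1‖ = r := by rw [norm_smul, hθn, mul_one, Real.norm_of_nonneg hr0.le]
  exact indicator_of_mem (by rw [mem_ball_zero_iff, hnr]; exact hr.2) _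

/-- improved integrability near the origin. Let `N ≥ 3` and let `K`
be a closed set satisfying condition (T) and contained in a rectifiable cone. Then every
local energy minimizer `u` in `ℝ^N ∖ K` satisfies
`∫_{B_1 ∖ K} |∇u(x)|² |x|^{2-N} dx < ∞`. -/
theorem statement15 {N : ℕ} (hN : 3 ≤ N) (K : Set (Rn N)) (hK : IsClosed K)
    (hT : CondT N K) (hcone : InRectCone N K)
    (u : Rn N → ℝ) (hu : LocMin N K u) :
    Phi N K u 1 < ⊤ := by
  obtain ⟨C, hC, hKC, hcon, hrect⟩ := hcone
  have hC0 := cone_null hN C hC hcon hrect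
  have hK0 : volume K = 0 := measure_mono_null hKC hC0
  obtain ⟨R, hR, hI⟩ := exists_R hN K hK hK0 u hu
  have hR0 : 0 < R := by linarith
  set M : ℝ := (N - 2 : ℕ) * ((∫ θ : sphere (0 : Rn N) 1, u (R • θ.1) ^ 2
        ∂(volume : Measure (Rn N)).toSphere) / 2) with hM
  have hi := hu.2.1 R hR0
  have hu2 : IntegrableOn (fun x => ‖gradient u x‖ ^ 2) (ball 0 R \ K) := by
    refine hi.mono' ((gradient_meas u).norm.pow_const 2).aestronglyMeasurable
      (Eventually.of_forall fun x => ?_)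
    rw [Real.norm_of_nonneg (by positivity)]
    nlinarith [sq_nonneg (u x)]
  set E : ℝ := ∫ x in ball (0 : Rn N) R \ K, ‖gradient u x‖ ^ 2 with hE
  set en : ℕ → ℝ := fun n => 1 / ((n : ℝ) + 1) with hen
  have hen0 : ∀ n, 0 < en n := fun n => by simp only [hen]; positivity
  have hen1 : ∀ n, en n ≤ R := fun n => by
    have : en n ≤ 1 := by
      simp only [hen]
      rw [div_le_one (by positivity)]
      linarith [(Nat.cast_nonneg n : (0:ℝ) ≤ n)]
    linarith
  set f : ℕ → Rn N → ℝ≥0∞ := fun n x => ENNReal.ofReal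
    (gw N (N - 2) (en n) R x * ‖gradient u x‖ ^ 2 + (R ^ (N - 2))⁻¹ * ‖gradient u x‖ ^ 2) with hf
  have hfm : ∀ n, Measurable (f n) := by
    intro n
    obtain ⟨L, hL⟩ := gw_lip (N := N) (k := N - 2) (hen0 n) (hen1 n)
    have h1 := hL.continuous.measurable
    have h2 := (gradient_meas u).norm.pow_const 2
    exact ((h1.mul h2).add (h2.const_mul _)).ennreal_ofReal
  have hfb : ∀ n, ∫⁻ x in ball (0 : Rn N) 1 \ K, f n x ≤
      ENNReal.ofReal (M + (R ^ (N - 2))⁻¹ * E) := by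
    intro n
    obtain ⟨I1, hb⟩ := key_bound hN K C hK hC hKC hcon hC0 u hu (hen0 n) (hen1 n) hI
    calc _ ≤ ∫⁻ x in ball (0 : Rn N) R \ K, f n x :=
          lintegral_mono_set (sdiff_subset_sdiff_left (ball_subset_ball hR.le))
      _ = ENNReal.ofReal (∫ x in ball (0 : Rn N) R \ K, (gw N (N - 2) (en n) R x *
            ‖gradient u x‖ ^ 2 + (R ^ (N - 2))⁻¹ * ‖gradient u x‖ ^ 2)) := by
          rw [ofReal_integral_eq_lintegral_ofReal]
          · exact I1.add (hu2.const_mul _)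
          · refine Eventually.of_forall fun x => ?_
            have := gw_nonneg (N := N) (k := N - 2) (hen0 n) (hen1 n) x
            simp only [Pi.zero_apply]
            positivity
      _ ≤ _ := by
          refine ENNReal.ofReal_le_ofReal ?_
          rw [integral_add I1 (hu2.const_mul _), integral_const_mul]
          linarith
  have hlim : Phi N K u 1 ≤ ENNReal.ofReal (M + (R ^ (N - 2))⁻¹ * E) := by
    calc Phi N K u 1 ≤ ∫⁻ x in ball (0 : Rn N) 1 \ K, liminf (fun n => f n x) atTop := by
          rw [Phi]
          refine setLIntegral_mono' (measurableSet_ball.diff hK.measurableSet) ?_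
          intro x hx
          refine le_liminf_of_le (by isBoundedDefault) ?_
          have hx1 : ‖x‖ < 1 := by simpa using hx.1
          rcases eq_or_ne x 0 with rfl | hx0
          · have : (2:ℝ) - N ≠ 0 := by
              have : (3:ℝ) ≤ N := by exact_mod_cast hN
              linarith
            simp [Real.zero_rpow this]
          · have hxp : 0 < ‖x‖ := norm_pos_iff.2 hx0
            have ht : Tendsto en atTop (𝓝 0) := tendsto_one_div_add_atTop_nhds_zero_nat
            filter_upwards [ht.eventually (gt_mem_nhds hxp)] with n hn
            refine ENNReal.ofReal_le_ofReal (le_of_eq ?_)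
            rw [gw, max_eq_left hn.le, min_eq_left (hx1.trans hR).le]
            have : (2:ℝ) - N = -((N - 2 : ℕ) : ℝ) := by
              rw [Nat.cast_sub (by omega)]; push_cast; ring
            rw [this, Real.rpow_neg hxp.le, Real.rpow_natCast]
            ring
      _ ≤ liminf (fun n => ∫⁻ x in ball (0 : Rn N) 1 \ K, f n x) atTop := lintegral_liminf_le hfm
      _ ≤ _ := liminf_le_of_frequently_le' (Eventually.of_forall hfb).frequently
  exact hlim.trans_lt ENNReal.ofReal_lt_top
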